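/- Let 0 < α < n, 0 < β < 1, and let b be a locally integrable real-valued function on Q_p^n. Suppose that for some variable exponent q(·) ∈ B(Q_p^n) there is a constant C such that for every ball B = B_γ(x), |B|_h^{−β/n} ‖(b − |B|_h^{−α/n} M_{α,B}^p(b)) χ_B‖_{L^{q(·)}} / ‖χ_B‖_{L^{q(·)}} ≤ C. Then b coincides almost everywhere with a function in Λ_β(Q_p^n). -/

import Mathlib

open MeasureTheory ENNReal

noncomputable section

variable {p : ℕ} [Fact p.Prime] {n : ℕ}

/-- The `p`-adic ball `B_γ(x) = {y : ‖y - x‖ ≤ p^γ}` in `ℚ_p^n`. -/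
def pBall (x : Fin n → ℚ_[p]) (γ : ℤ) : Set (Fin n → ℚ_[p]) :=
  Metric.closedBall x ((p : ℝ) ^ γ)

variable [MeasurableSpace (Fin n → ℚ_[p])]

/-- The `p`-adic fractional maximal function `M_α^p f` (with values in `ℝ≥0∞`). -/
def fracMax (μ : Measure (Fin n → ℚ_[p])) (α : ℝ) (f : (Fin n → ℚ_[p]) → ℝ)
    (x : Fin n → ℚ_[p]) : ℝ≥0∞ :=
  ⨆ γ : ℤ, μ (pBall x γ) ^ (α / (n : ℝ) - 1) * ∫⁻ y in pBall x γ, (‖f y‖₊ : ℝ≥0∞) ∂μ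

/-- The fractional maximal function `M_{α,B*}^p f` restricted to a fixed ball `B*`. -/
def fracMaxOn (μ : Measure (Fin n → ℚ_[p])) (α : ℝ) (B : Set (Fin n → ℚ_[p]))
    (f : (Fin n → ℚ_[p]) → ℝ) (x : Fin n → ℚ_[p]) : ℝ≥0∞ :=
  ⨆ (γ : ℤ), ⨆ (_ : pBall x γ ⊆ B),
    μ (pBall x γ) ^ (α / (n : ℝ) - 1) * ∫⁻ y in pBall x γ, (‖f y‖₊ : ℝ≥0∞) ∂μ

/-- The maximal commutator `M_{α,b}^p f`. -/
def maxComm (μ : Measure (Fin n → ℚ_[p])) (α : ℝ) (b f : (Fin n → ℚ_[p]) → ℝ)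
    (x : Fin n → ℚ_[p]) : ℝ≥0∞ :=
  ⨆ γ : ℤ, μ (pBall x γ) ^ (α / (n : ℝ) - 1) *
    ∫⁻ y in pBall x γ, (‖b x - b y‖₊ : ℝ≥0∞) * (‖f y‖₊ : ℝ≥0∞) ∂μ

/-- The nonlinear commutator `[b, M_α^p] f = b · M_α^p f - M_α^p (b f)`. -/
def nlComm (μ : Measure (Fin n → ℚ_[p])) (α : ℝ) (b f : (Fin n → ℚ_[p]) → ℝ)
    (x : Fin n → ℚ_[p]) : ℝ :=
  b x * (fracMax μ α f x).toReal - (fracMax μ α (fun y => b y * f y) x).toReal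

/-- Membership in the `p`-adic Lipschitz space `Λ_β`. -/
def MemLipschitz (β : ℝ) (f : (Fin n → ℚ_[p]) → ℝ) : Prop :=
  ∃ C : ℝ, 0 ≤ C ∧ ∀ x y, |f x - f y| ≤ C * ‖x - y‖ ^ β

/-- The `p`-adic Lipschitz norm `‖f‖_{Λ_β}`. -/
def lipNorm (β : ℝ) (f : (Fin n → ℚ_[p]) → ℝ) : ℝ :=
  sSup {r : ℝ | ∃ x y : Fin n → ℚ_[p], x ≠ y ∧ r = |f x - f y| / ‖x - y‖ ^ β}

/-- The average `b_B` of `b` over a set `B`. -/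
def avg (μ : Measure (Fin n → ℚ_[p])) (B : Set (Fin n → ℚ_[p]))
    (b : (Fin n → ℚ_[p]) → ℝ) : ℝ :=
  (μ B).toReal⁻¹ * ∫ y in B, b y ∂μ

/-- The Luxemburg norm of an `ℝ≥0∞`-valued function. -/
def luxNormE (μ : Measure (Fin n → ℚ_[p])) (q : (Fin n → ℚ_[p]) → ℝ)
    (g : (Fin n → ℚ_[p]) → ℝ≥0∞) : ℝ≥0∞ :=
  sInf {η : ℝ≥0∞ | 0 < η ∧ η < ⊤ ∧ ∫⁻ x, (g x / η) ^ q x ∂μ ≤ 1}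

/-- The Luxemburg norm `‖f‖_{L^{q(·)}}` of a real-valued function. -/
def luxNorm (μ : Measure (Fin n → ℚ_[p])) (q : (Fin n → ℚ_[p]) → ℝ)
    (f : (Fin n → ℚ_[p]) → ℝ) : ℝ≥0∞ :=
  luxNormE μ q fun x => (‖f x‖₊ : ℝ≥0∞)

/-- The class `P(ℚ_p^n)` of variable exponents: `1 < r₋ ≤ r₊ < ∞`. -/
def IsPExp (μ : Measure (Fin n → ℚ_[p])) (r : (Fin n → ℚ_[p]) → ℝ) : Prop :=
  Measurable r ∧ (∀ x, 1 ≤ r x) ∧ 1 < essInf r μ ∧ ∃ M : ℝ, ∀ᵐ x ∂μ, r x ≤ M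

/-- The class `C^log(ℚ_p^n)` of globally log-Hölder continuous variable exponents. -/
def IsLogHolder (μ : Measure (Fin n → ℚ_[p])) (r : (Fin n → ℚ_[p]) → ℝ) : Prop :=
  Measurable r ∧ (∀ x, 1 ≤ r x) ∧
    ∃ C : ℝ, 0 ≤ C ∧
      (∀ (γ : ℤ) (x : Fin n → ℚ_[p]),
        (γ : ℝ) * (essInf r (μ.restrict (pBall x γ)) - essSup r (μ.restrict (pBall x γ))) ≤ C) ∧
      ∀ x y : Fin n → ℚ_[p], |r x - r y| ≤ C / Real.logb p ((p : ℝ) + min ‖x‖ ‖y‖)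

/-- The set of values whose supremum is the `lip_β^q` norm. -/
def lipqSet (μ : Measure (Fin n → ℚ_[p])) (β q : ℝ) (f : (Fin n → ℚ_[p]) → ℝ) : Set ℝ :=
  {r : ℝ | ∃ (x : Fin n → ℚ_[p]) (γ : ℤ),
    r = (μ (pBall x γ)).toReal ^ (-(β / (n : ℝ))) *
      ((μ (pBall x γ)).toReal⁻¹ * ∫ y in pBall x γ, |f y - avg μ (pBall x γ) f| ^ q ∂μ) ^ (1 / q)}

/-!
Almost everywhere on a ball `B` we have `⟨b⟩_B ≤ |B|^{-α/n} M_{α,B} b`, so the positive part of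
`⟨b⟩_B - b` is dominated by `|b - |B|^{-α/n} M_{α,B} b|`. It carries half of
`∫_B |b - ⟨b⟩_B|`. Applying the bound for averaging operators on `L^{q(·)}`, which follows from that
for the maximal operator, to this positive part shows that the mean oscillation of `b` over `B` is
at most a constant times `|B|^{β/n}`.

The averages over the balls `B_γ(x)` therefore converge geometrically to a limit `g x` as
`γ → -∞`. Points at distance at most `p^γ` have the same ball of radius `p^γ`, so `g` is Lipschitz
of order `β`; and `g = b` almost everywhere by Lebesgue differentiation.
-/

open Metric Set Filter Topology NNReal

section Balls

theorem one_lt_cast_prime (p : ℕ) [Fact p.Prime] : (1 : ℝ) < p :=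
  Nat.one_lt_cast.2 (Fact.out : p.Prime).one_lt

theorem zpow_cast_prime_pos (p : ℕ) [Fact p.Prime] (γ : ℤ) : (0 : ℝ) < (p : ℝ) ^ γ :=
  zpow_pos (one_pos.trans (one_lt_cast_prime p)) γ

omit [MeasurableSpace (Fin n → ℚ_[p])]

theorem norm_sub_natCast_mul_zpow_le_iff (z : ℚ_[p]) (γ : ℤ) (k : ℕ) :
    ‖z - k * (p : ℚ_[p]) ^ (-(γ + 1))‖ ≤ (p : ℝ) ^ γ ↔ ‖z * (p : ℚ_[p]) ^ (γ + 1) - k‖ < 1 := by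
  have hp : (p : ℚ_[p]) ≠ 0 := Nat.cast_ne_zero.2 (Fact.out : p.Prime).ne_zero
  have hscale : z - k * (p : ℚ_[p]) ^ (-(γ + 1)) =
      (z * (p : ℚ_[p]) ^ (γ + 1) - k) * (p : ℚ_[p]) ^ (-(γ + 1)) := by
    rw [sub_mul, mul_assoc, ← zpow_add₀ hp, add_neg_cancel, zpow_zero, mul_one]
  rw [Padic.norm_le_pow_iff_norm_lt_pow_add_one, hscale, norm_mul, Padic.norm_p_zpow, neg_neg]
  exact mul_lt_iff_lt_one_left (zpow_cast_prime_pos p _)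

theorem existsUnique_norm_sub_natCast_mul_zpow_le {z : ℚ_[p]} {γ : ℤ}
    (hz : ‖z‖ ≤ (p : ℝ) ^ (γ + 1)) :
    ∃! k : Fin p, ‖z - (k : ℕ) * (p : ℚ_[p]) ^ (-(γ + 1))‖ ≤ (p : ℝ) ^ γ := by
  have hint : ‖z * (p : ℚ_[p]) ^ (γ + 1)‖ ≤ 1 := by
    rw [norm_mul, Padic.norm_p_zpow, zpow_neg]
    exact mul_inv_le_one_of_le₀ hz (zpow_cast_prime_pos p _).le
  let w : ℤ_[p] := ⟨_, hint⟩
  have hresidue (k : ℕ) : ‖z * (p : ℚ_[p]) ^ (γ + 1) - k‖ < 1 ↔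
      w - k ∈ IsLocalRing.maximalIdeal ℤ_[p] := by
    rw [IsLocalRing.mem_maximalIdeal, PadicInt.mem_nonunits]
    rfl
  simp only [norm_sub_natCast_mul_zpow_le_iff, hresidue]
  obtain ⟨k, ⟨hkp, hk⟩, hunique⟩ := PadicInt.existsUnique_mem_range w
  exact ⟨⟨k, hkp⟩, hk, fun l hl => Fin.ext (hunique l ⟨l.2, hl⟩)⟩

theorem mem_pBall_iff {x y : Fin n → ℚ_[p]} {γ : ℤ} :
    y ∈ pBall x γ ↔ ∀ i, ‖y i - x i‖ ≤ (p : ℝ) ^ γ := by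
  rw [pBall, mem_closedBall_iff_norm, pi_norm_le_iff_of_nonneg (zpow_cast_prime_pos p γ).le]
  rfl

theorem mem_pBall_self (x : Fin n → ℚ_[p]) (γ : ℤ) : x ∈ pBall x γ :=
  mem_closedBall_self (zpow_cast_prime_pos p γ).le

theorem pBall_subset_pBall (x : Fin n → ℚ_[p]) {γ δ : ℤ} (h : γ ≤ δ) : pBall x γ ⊆ pBall x δ :=
  closedBall_subset_closedBall (zpow_le_zpow_right₀ (one_lt_cast_prime p).le h)

theorem pBall_eq_of_mem {x y : Fin n → ℚ_[p]} {γ : ℤ} (h : y ∈ pBall x γ) :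
    pBall x γ = pBall y γ :=
  IsUltrametricDist.closedBall_eq_of_mem h

/-- The vector with coordinates `kᵢ p^{-(γ+1)}`. As the digits `kᵢ` run through `0, …, p - 1`,
these vectors represent the cosets of `B_γ(0)` in `B_{γ+1}(0)`. -/
def digitVector (γ : ℤ) (k : Fin n → Fin p) : Fin n → ℚ_[p] :=
  fun i => (k i : ℕ) * (p : ℚ_[p]) ^ (-(γ + 1))

theorem existsUnique_mem_pBall_add_digitVector {x y : Fin n → ℚ_[p]} {γ : ℤ}
    (hy : y ∈ pBall x (γ + 1)) : ∃! k, y ∈ pBall (x + digitVector γ k) γ := by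
  choose k hk hunique using fun i =>
    existsUnique_norm_sub_natCast_mul_zpow_le (mem_pBall_iff.1 hy i)
  simp only [mem_pBall_iff, Pi.add_apply, digitVector, ← sub_sub]
  exact ⟨k, hk, fun l hl => funext fun i => hunique i (l i) (hl i)⟩

theorem pBall_add_digitVector_subset (x : Fin n → ℚ_[p]) (γ : ℤ) (k : Fin n → Fin p) :
    pBall (x + digitVector γ k) γ ⊆ pBall x (γ + 1) := by
  have hcenter : x + digitVector γ k ∈ pBall x (γ + 1) := by
    simp only [mem_pBall_iff, Pi.add_apply, digitVector, add_sub_cancel_left, norm_mul,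
      Padic.norm_p_zpow, neg_neg]
    intro i
    have hdigit : ‖((k i : ℕ) : ℚ_[p])‖ ≤ 1 := mod_cast Padic.norm_int_le_one (p := p) (k i : ℕ)
    exact mul_le_of_le_one_left (zpow_cast_prime_pos p _).le hdigit
  rw [pBall_eq_of_mem hcenter]
  exact pBall_subset_pBall _ (lt_add_one γ).le

theorem iUnion_pBall_add_digitVector (x : Fin n → ℚ_[p]) (γ : ℤ) :
    ⋃ k, pBall (x + digitVector γ k) γ = pBall x (γ + 1) := by
  refine (iUnion_subset (pBall_add_digitVector_subset x γ)).antisymm fun y hy => ?_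
  exact mem_iUnion.2 (existsUnique_mem_pBall_add_digitVector hy).exists

theorem pairwise_disjoint_pBall_add_digitVector (x : Fin n → ℚ_[p]) (γ : ℤ) :
    Pairwise (Function.onFun Disjoint fun k => pBall (x + digitVector γ k) γ) := by
  refine fun k l hkl => disjoint_left.2 fun y hk hl => hkl ?_
  have hy := pBall_add_digitVector_subset x γ k hk
  exact (existsUnique_mem_pBall_add_digitVector hy).unique hk hl

end Balls

section BallMeasure

variable (μ : Measure (Fin n → ℚ_[p]))

theorem measure_pBall_ne_zero [μ.IsOpenPosMeasure] (x : Fin n → ℚ_[p]) (γ : ℤ) :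
    μ (pBall x γ) ≠ 0 :=
  (measure_closedBall_pos μ x (zpow_cast_prime_pos p γ)).ne'

theorem measure_pBall_ne_top [IsFiniteMeasureOnCompacts μ] (x : Fin n → ℚ_[p]) (γ : ℤ) :
    μ (pBall x γ) ≠ ⊤ :=
  measure_closedBall_lt_top.ne

theorem measureReal_pBall_pos [μ.IsOpenPosMeasure] [IsFiniteMeasureOnCompacts μ]
    (x : Fin n → ℚ_[p]) (γ : ℤ) : 0 < μ.real (pBall x γ) :=
  ENNReal.toReal_pos (measure_pBall_ne_zero μ x γ) (measure_pBall_ne_top μ x γ)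

variable [BorelSpace (Fin n → ℚ_[p])]

theorem measurableSet_pBall (x : Fin n → ℚ_[p]) (γ : ℤ) : MeasurableSet (pBall x γ) :=
  measurableSet_closedBall

theorem measure_pBall_add [μ.IsAddLeftInvariant] (x y : Fin n → ℚ_[p]) (γ : ℤ) :
    μ (pBall (x + y) γ) = μ (pBall y γ) := by
  rw [pBall, pBall, ← add_sub_cancel_left x y, ← preimage_add_closedBall, measure_preimage_add,
    add_sub_cancel_left]

theorem measure_pBall_succ [μ.IsAddLeftInvariant] (x : Fin n → ℚ_[p]) (γ : ℤ) :
    μ (pBall x (γ + 1)) = (p : ℝ≥0∞) ^ n * μ (pBall x γ) := by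
  rw [← iUnion_pBall_add_digitVector, measure_iUnion (pairwise_disjoint_pBall_add_digitVector x γ)
    fun k => measurableSet_pBall _ γ, tsum_fintype]
  simp only [add_comm x, measure_pBall_add, Finset.sum_const, Finset.card_univ,
    Fintype.card_pi_const, Fintype.card_fin, nsmul_eq_mul, Nat.cast_pow]

theorem measureReal_pBall_succ [μ.IsAddLeftInvariant] (x : Fin n → ℚ_[p]) (γ : ℤ) :
    μ.real (pBall x (γ + 1)) = (p : ℝ) ^ n * μ.real (pBall x γ) := by
  simp only [measureReal_def, measure_pBall_succ, ENNReal.toReal_mul, ENNReal.toReal_pow,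
    ENNReal.toReal_natCast]

theorem measureReal_pBall [μ.IsAddLeftInvariant] (x : Fin n → ℚ_[p]) (γ : ℤ) :
    μ.real (pBall x γ) = ((p : ℝ) ^ γ) ^ n * μ.real (closedBall 0 1) := by
  have hp : (p : ℝ) ≠ 0 := (one_pos.trans (one_lt_cast_prime p)).ne'
  induction γ using Int.induction_on with
  | zero => simpa [pBall, measureReal_def] using congrArg ENNReal.toReal (measure_pBall_add μ x 0 0)
  | succ i ih => rw [measureReal_pBall_succ, ih, zpow_add_one₀ hp, mul_pow]; ring
  | pred i ih =>
    rw [← sub_add_cancel (-(i : ℤ)) 1, measureReal_pBall_succ, zpow_add_one₀ hp, mul_pow,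
      mul_comm _ ((p : ℝ) ^ n), mul_assoc] at ih
    exact mul_left_cancel₀ (pow_ne_zero n hp) ih

theorem measureReal_pBall_rpow_div [μ.IsAddLeftInvariant] (hn : 0 < n) (β : ℝ)
    (x : Fin n → ℚ_[p]) (γ : ℤ) :
    μ.real (pBall x γ) ^ (β / n) = μ.real (closedBall 0 1) ^ (β / n) * ((p : ℝ) ^ γ) ^ β := by
  have hr := (zpow_cast_prime_pos p γ).le
  rw [measureReal_pBall, Real.mul_rpow (pow_nonneg hr n) measureReal_nonneg, ← Real.rpow_natCast,
    ← Real.rpow_mul hr, mul_div_cancel₀ β (Nat.cast_ne_zero.2 hn.ne'), mul_comm]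

theorem isUnifLocDoublingMeasure_of_isAddLeftInvariant [μ.IsAddLeftInvariant] :
    IsUnifLocDoublingMeasure μ := by
  refine ⟨⟨((p : ℝ≥0) ^ n) ^ 2, ?_⟩⟩
  filter_upwards [self_mem_nhdsWithin] with ε hε x
  obtain ⟨γ, hγε, hεγ⟩ := exists_mem_Ico_zpow (mem_Ioi.1 hε) (one_lt_cast_prime p)
  have hp : (2 : ℝ) ≤ p := mod_cast (Fact.out : p.Prime).two_le
  have hradius : 2 * ε ≤ (p : ℝ) ^ (γ + 1 + 1) := by
    rw [zpow_add_one₀ (by positivity) (γ + 1), mul_comm]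
    gcongr
  calc μ (closedBall x (2 * ε)) ≤ μ (pBall x (γ + 1 + 1)) :=
        measure_mono (closedBall_subset_closedBall hradius)
    _ = ((((p : ℝ≥0) ^ n) ^ 2 : ℝ≥0) : ℝ≥0∞) * μ (pBall x γ) := by
        rw [measure_pBall_succ, measure_pBall_succ, ← mul_assoc]; push_cast; ring
    _ ≤ ((((p : ℝ≥0) ^ n) ^ 2 : ℝ≥0) : ℝ≥0∞) * μ (closedBall x ε) := by
        gcongr
        exact closedBall_subset_closedBall hγε

end BallMeasure

section IntegerSequences

theorem tendsto_int_atBot_iff_tendsto_neg_natCast {α : Type*} {f : ℤ → α} {l : Filter α} :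
    Tendsto f atBot l ↔ Tendsto (fun k : ℕ => f (-k)) atTop l := by
  rw [← map_neg_atTop, tendsto_map'_iff, ← Nat.map_cast_int_atTop, tendsto_map'_iff]
  rfl

theorem exists_tendsto_atBot_of_dist_le_geometric {E : Type*} [PseudoMetricSpace E]
    [CompleteSpace E] {a : ℤ → E} {K R : ℝ} (hR : 1 < R)
    (ha : ∀ γ, dist (a (γ - 1)) (a γ) ≤ K * R ^ γ) :
    ∃ l, Tendsto a atBot (𝓝 l) ∧ ∀ γ, dist (a γ) l ≤ K / (1 - R⁻¹) * R ^ γ := by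
  have hR0 : R ≠ 0 := (one_pos.trans hR).ne'
  have hr : R⁻¹ < 1 := inv_lt_one_of_one_lt₀ hR
  have hgeom (γ : ℤ) (k : ℕ) :
      dist (a (γ - k)) (a (γ - (k + 1 : ℕ))) ≤ K * R ^ γ * R⁻¹ ^ k := by
    have h := ha (γ - k)
    rwa [dist_comm, zpow_sub₀ hR0, zpow_natCast, div_eq_mul_inv, ← inv_pow, ← mul_assoc,
      sub_sub, ← Nat.cast_succ] at h
  obtain ⟨l, hl⟩ := cauchySeq_tendsto_of_complete (cauchySeq_of_le_geometric _ _ hr (hgeom 0))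
  have hlim : Tendsto a atBot (𝓝 l) :=
    tendsto_int_atBot_iff_tendsto_neg_natCast.2 (by simpa only [zero_sub] using hl)
  refine ⟨l, hlim, fun γ => ?_⟩
  have hshift : Tendsto (fun k : ℕ => a (γ - k)) atTop (𝓝 l) := by
    simp only [sub_eq_add_neg]
    exact hlim.comp (tendsto_atBot_add_const_left _ γ
      (tendsto_neg_atTop_atBot.comp tendsto_natCast_atTop_atTop))
  have h := dist_le_of_le_geometric_of_tendsto₀ _ _ hr (hgeom γ) hshift
  rwa [Nat.cast_zero, sub_zero, mul_div_right_comm] at h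

theorem exists_tendsto_atBot_of_dist_le_rpow {X E : Type*} [PseudoMetricSpace X] [MetricSpace E]
    [CompleteSpace E] {a : ℤ → X → E} {P K β : ℝ} (hP : 1 < P) (hβ : 0 < β)
    (hK : 0 ≤ K) (hconst : ∀ γ x y, dist x y ≤ P ^ γ → a γ x = a γ y)
    (hstep : ∀ γ x, dist (a (γ - 1) x) (a γ x) ≤ K * (P ^ γ) ^ β) :
    ∃ g : X → E, (∀ x, Tendsto (fun γ => a γ x) atBot (𝓝 (g x))) ∧
      ∃ C, 0 ≤ C ∧ ∀ x y, dist (g x) (g y) ≤ C * dist x y ^ β := by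
  have hP0 : 0 < P := one_pos.trans hP
  have hR : 1 < P ^ β := Real.one_lt_rpow hP hβ
  simp only [← Real.rpow_zpow_comm hP0.le] at hstep
  choose g hg hdist using fun x =>
    exists_tendsto_atBot_of_dist_le_geometric (a := (a · x)) hR (hstep · x)
  have hr : 0 < 1 - (P ^ β)⁻¹ := sub_pos.2 (inv_lt_one_of_one_lt₀ hR)
  set L := K / (1 - (P ^ β)⁻¹)
  refine ⟨g, hg, 2 * L * P ^ β, by positivity, fun x y => ?_⟩
  rcases dist_nonneg.eq_or_lt (a := 0) (b := dist x y) with hxy | hxy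
  · have hg_eq : g x = g y := tendsto_nhds_unique (hg x)
      ((hg y).congr fun γ => (hconst γ x y (hxy ▸ (zpow_pos hP0 γ).le)).symm)
    rw [hg_eq, dist_self]
    positivity
  · obtain ⟨γ, hγ, hγ'⟩ := exists_mem_Ioc_zpow hxy hP
    calc dist (g x) (g y) ≤ dist (a (γ + 1) x) (g x) + dist (a (γ + 1) y) (g y) := by
          rw [hconst _ _ _ hγ']
          exact dist_triangle_left _ _ _
      _ ≤ L * (P ^ β) ^ (γ + 1) + L * (P ^ β) ^ (γ + 1) := add_le_add (hdist x _) (hdist y _)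
      _ = 2 * L * P ^ β * (P ^ γ) ^ β := by
          rw [zpow_add_one₀ (one_pos.trans hR).ne', Real.rpow_zpow_comm hP0.le]
          ring
      _ ≤ 2 * L * P ^ β * dist x y ^ β := by gcongr

end IntegerSequences

section Averages

variable {X : Type*} [MeasurableSpace X] {ν : Measure X}

theorem norm_setAverage_sub_le {E : Type*} [NormedAddCommGroup E] [NormedSpace ℝ E]
    [CompleteSpace E] {f : X → E} {s t : Set X} (hst : s ⊆ t) (hs : ν s ≠ 0) (ht : ν t ≠ ⊤)
    (hf : IntegrableOn f t ν) (c : E) :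
    ‖⨍ y in s, f y ∂ν - c‖ ≤ ν.real t / ν.real s * ⨍ y in t, ‖f y - c‖ ∂ν := by
  have hs' : ν s ≠ ⊤ := measure_ne_top_of_subset hst ht
  have hs_pos : 0 < ν.real s := ENNReal.toReal_pos hs hs'
  have ht_pos : 0 < ν.real t := hs_pos.trans_le (measureReal_mono hst ht)
  have hsub : ⨍ y in s, f y ∂ν - c = ⨍ y in s, (f y - c) ∂ν := by
    rw [setAverage_eq, setAverage_eq, integral_sub (hf.mono_set hst) (integrableOn_const hs'),
      setIntegral_const, smul_sub, inv_smul_smul₀ hs_pos.ne']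
  calc ‖⨍ y in s, f y ∂ν - c‖ ≤ (ν.real s)⁻¹ * ∫ y in s, ‖f y - c‖ ∂ν := by
        rw [hsub, setAverage_eq, norm_smul, norm_inv, Real.norm_of_nonneg hs_pos.le]
        gcongr
        exact norm_integral_le_integral_norm _
    _ ≤ (ν.real s)⁻¹ * ∫ y in t, ‖f y - c‖ ∂ν := by
        gcongr ?_ * ?_
        exact setIntegral_mono_set (hf.sub (integrableOn_const ht)).norm
          (ae_of_all _ fun y => norm_nonneg _) hst.eventuallyLE
    _ = ν.real t / ν.real s * ⨍ y in t, ‖f y - c‖ ∂ν := by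
        rw [setAverage_eq, smul_eq_mul]
        field_simp

theorem average_abs_sub_average [IsFiniteMeasure ν] {f : X → ℝ} (hf : Integrable f ν) :
    ⨍ y, |f y - ⨍ z, f z ∂ν| ∂ν = 2 * ⨍ y, max (⨍ z, f z ∂ν - f y) 0 ∂ν := by
  set m := ⨍ z, f z ∂ν
  have habs (y : X) : |f y - m| = (f y - m) + 2 * max (m - f y) 0 := by
    rcases le_total (f y) m with h | h
    · rw [abs_of_nonpos (sub_nonpos.2 h), max_eq_left (sub_nonneg.2 h)]; ring
    · rw [abs_of_nonneg (sub_nonneg.2 h), max_eq_right (sub_nonpos.2 h)]; ring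
  have hsub : Integrable (fun y => f y - m) ν := hf.sub (integrable_const m)
  have hpos : Integrable (fun y => max (m - f y) 0) ν := ((integrable_const m).sub hf).pos_part
  simp only [habs, average_eq]
  rw [integral_add hsub (hpos.const_mul 2), integral_sub_average,
    zero_add, integral_const_mul, smul_eq_mul, smul_eq_mul, mul_left_comm]

theorem measure_rpow_sub_one_mul_setLIntegral {s : Set X} (hs : ν s ≠ 0) (hs' : ν s ≠ ⊤) (a : ℝ)
    (f : X → ℝ≥0∞) : ν s ^ (a - 1) * ∫⁻ y in s, f y ∂ν = ν s ^ a * ⨍⁻ y in s, f y ∂ν := by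
  rw [sub_eq_add_neg, ENNReal.rpow_add _ _ hs hs', ENNReal.rpow_neg_one, setLAverage_eq,
    ENNReal.div_eq_inv_mul, mul_assoc]

theorem ofReal_average_norm {E : Type*} [NormedAddCommGroup E] {f : X → E}
    (hf : Integrable f ν) : ENNReal.ofReal (⨍ y, ‖f y‖ ∂ν) = ⨍⁻ y, ‖f y‖ₑ ∂ν := by
  simp only [laverage_eq, ← ofReal_norm]
  rw [ofReal_average hf.norm (ae_of_all _ fun y => norm_nonneg _)]

theorem ofReal_average_abs_sub_average [IsFiniteMeasure ν] {f : X → ℝ} (hf : Integrable f ν) :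
    ENNReal.ofReal (⨍ y, |f y - ⨍ z, f z ∂ν| ∂ν) =
      2 * ⨍⁻ y, ‖max (⨍ z, f z ∂ν - f y) 0‖ₑ ∂ν := by
  have hpos : Integrable (fun y => max (⨍ z, f z ∂ν - f y) 0) ν :=
    ((integrable_const _).sub hf).pos_part
  rw [average_abs_sub_average hf, ENNReal.ofReal_mul zero_le_two, ENNReal.ofReal_ofNat,
    ← ofReal_average_norm hpos]
  simp only [Real.norm_of_nonneg (le_max_right _ _)]

end Averages

section Campanato

theorem integrableOn_pBall {E : Type*} [NormedAddCommGroup E] {f : (Fin n → ℚ_[p]) → E}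
    {μ : Measure (Fin n → ℚ_[p])} (hf : LocallyIntegrable f μ) (x : Fin n → ℚ_[p]) (γ : ℤ) :
    IntegrableOn f (pBall x γ) μ :=
  hf.integrableOn_isCompact (isCompact_closedBall x _)

variable [BorelSpace (Fin n → ℚ_[p])] (μ : Measure (Fin n → ℚ_[p])) [μ.IsAddHaarMeasure]

theorem ae_tendsto_setAverage_pBall {E : Type*} [NormedAddCommGroup E] [NormedSpace ℝ E]
    [CompleteSpace E] {f : (Fin n → ℚ_[p]) → E} (hf : LocallyIntegrable f μ) :
    ∀ᵐ x ∂μ, Tendsto (fun γ : ℤ => ⨍ y in pBall x γ, f y ∂μ) atBot (𝓝 (f x)) := by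
  have := isUnifLocDoublingMeasure_of_isAddLeftInvariant μ
  have hradius : Tendsto (fun γ : ℤ => (p : ℝ) ^ γ) atBot (𝓝[>] 0) := by
    refine tendsto_nhdsWithin_iff.2 ⟨tendsto_int_atBot_iff_tendsto_neg_natCast.2 ?_,
      Eventually.of_forall (zpow_cast_prime_pos p)⟩
    simpa only [zpow_neg, zpow_natCast, ← inv_pow] using
      tendsto_pow_atTop_nhds_zero_of_lt_one (inv_nonneg.2 p.cast_nonneg)
        (inv_lt_one_of_one_lt₀ (one_lt_cast_prime p))
  filter_upwards [IsUnifLocDoublingMeasure.ae_tendsto_average μ hf 1] with x hx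
  exact hx (fun _ => x) _ hradius (Eventually.of_forall fun γ => by
    rw [one_mul]
    exact mem_pBall_self x γ)

variable {μ}

theorem exists_memLipschitz_of_setAverage_abs_sub_setAverage_le {f : (Fin n → ℚ_[p]) → ℝ}
    (hf : LocallyIntegrable f μ) {β K : ℝ} (hβ : 0 < β) (hK : 0 ≤ K)
    (hosc : ∀ γ x, ⨍ y in pBall x γ, |f y - ⨍ z in pBall x γ, f z ∂μ| ∂μ ≤ K * ((p : ℝ) ^ γ) ^ β) :
    ∃ g, MemLipschitz β g ∧ f =ᵐ[μ] g := by
  have hstep (γ : ℤ) (x : Fin n → ℚ_[p]) :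
      dist (⨍ y in pBall x (γ - 1), f y ∂μ) (⨍ y in pBall x γ, f y ∂μ) ≤
        (p : ℝ) ^ n * K * ((p : ℝ) ^ γ) ^ β := by
    have hratio : μ.real (pBall x γ) / μ.real (pBall x (γ - 1)) = (p : ℝ) ^ n := by
      rw [div_eq_iff (measureReal_pBall_pos μ x _).ne', ← measureReal_pBall_succ, sub_add_cancel]
    have h := norm_setAverage_sub_le (pBall_subset_pBall x (sub_one_lt γ).le)
      (measure_pBall_ne_zero μ x _) (measure_pBall_ne_top μ x γ) (integrableOn_pBall hf x γ)
      (⨍ y in pBall x γ, f y ∂μ)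
    rw [hratio] at h
    rw [dist_eq_norm, mul_assoc]
    exact h.trans (by gcongr; exact hosc γ x)
  obtain ⟨g, hg, C, hC, hgC⟩ := exists_tendsto_atBot_of_dist_le_rpow
    (a := fun γ x => ⨍ y in pBall x γ, f y ∂μ) (one_lt_cast_prime p) hβ (by positivity)
    (fun γ x y hxy => by rw [pBall_eq_of_mem (mem_closedBall'.2 hxy)]) hstep
  refine ⟨g, ⟨C, hC, fun x y => ?_⟩, ?_⟩
  · rw [← Real.dist_eq, ← dist_eq_norm]
    exact hgC x y
  · filter_upwards [ae_tendsto_setAverage_pBall μ hf] with x hx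
    exact tendsto_nhds_unique hx (hg x)

end Campanato

section Luxemburg

variable (μ : Measure (Fin n → ℚ_[p])) (q : (Fin n → ℚ_[p]) → ℝ)

theorem luxNormE_congr_ae {f g : (Fin n → ℚ_[p]) → ℝ≥0∞} (h : f =ᵐ[μ] g) :
    luxNormE μ q f = luxNormE μ q g := by
  have hint (η : ℝ≥0∞) : ∫⁻ x, (f x / η) ^ q x ∂μ = ∫⁻ x, (g x / η) ^ q x ∂μ :=
    lintegral_congr_ae (h.mono fun x hx => by simp only [hx])
  simp only [luxNormE, hint]

variable {μ q}

theorem luxNormE_mono_ae (hq : ∀ᵐ x ∂μ, 0 ≤ q x) {f g : (Fin n → ℚ_[p]) → ℝ≥0∞}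
    (h : f ≤ᵐ[μ] g) : luxNormE μ q f ≤ luxNormE μ q g := by
  refine sInf_le_sInf fun η ⟨hη, hη', hg⟩ => ⟨hη, hη', (lintegral_mono_ae ?_).trans hg⟩
  filter_upwards [hq, h] with x hqx hfg
  gcongr

theorem mul_luxNormE_le (hq : ∀ᵐ x ∂μ, 0 ≤ q x) (c : ℝ≥0∞) (f : (Fin n → ℚ_[p]) → ℝ≥0∞) :
    c * luxNormE μ q f ≤ luxNormE μ q fun x => c * f x := by
  have hfinite {a : ℝ≥0∞} (ha : a ≠ 0) (ha' : a ≠ ⊤) :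
      a * luxNormE μ q f ≤ luxNormE μ q fun x => a * f x := by
    refine le_sInf fun η ⟨hη, hη', hle⟩ => ?_
    rw [mul_comm, ← ENNReal.le_div_iff_mul_le (Or.inl ha) (Or.inl ha')]
    refine sInf_le ⟨ENNReal.div_pos hη.ne' ha', ENNReal.div_lt_top hη'.ne ha, ?_⟩
    have hdiv (x : Fin n → ℚ_[p]) : f x / (η / a) = a * f x / η := by
      rw [div_eq_mul_inv, ENNReal.inv_div (Or.inl ha') (Or.inl ha), ← mul_div_assoc, mul_comm]
    simpa only [hdiv] using hle
  rcases eq_or_ne c 0 with rfl | hc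
  · simp only [zero_mul, zero_le]
  rcases eq_or_ne c ⊤ with rfl | hc'
  · conv_lhs => rw [← ENNReal.iSup_natCast, ENNReal.iSup_mul]
    refine iSup_le fun k => ?_
    rcases eq_or_ne k 0 with rfl | hk
    · simp only [Nat.cast_zero, zero_mul, zero_le]
    · exact (hfinite (Nat.cast_ne_zero.2 hk) (ENNReal.natCast_ne_top k)).trans
        (luxNormE_mono_ae hq (ae_of_all _ fun x => mul_le_mul' le_top le_rfl))
  · exact hfinite hc hc'

theorem lintegral_indicator_one_div_rpow (hq : ∀ᵐ x ∂μ, 0 < q x) {s : Set (Fin n → ℚ_[p])}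
    (hs : MeasurableSet s) (η : ℝ≥0∞) :
    ∫⁻ x, ((‖s.indicator (fun _ => (1 : ℝ)) x‖₊ : ℝ≥0∞) / η) ^ q x ∂μ =
      ∫⁻ x in s, η⁻¹ ^ q x ∂μ := by
  rw [← lintegral_indicator hs]
  refine lintegral_congr_ae (hq.mono fun x hqx => ?_)
  by_cases hx : x ∈ s
  · simp only [indicator_of_mem hx, nnnorm_one, ENNReal.coe_one, one_div]
  · simp only [indicator_of_notMem hx, nnnorm_zero, ENNReal.coe_zero, ENNReal.zero_div,
      ENNReal.zero_rpow_of_pos hqx]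

theorem luxNorm_indicator_one_le_max (hq : ∀ᵐ x ∂μ, 1 ≤ q x) {s : Set (Fin n → ℚ_[p])}
    (hs : MeasurableSet s) (hs' : μ s ≠ ⊤) :
    luxNorm μ q (s.indicator fun _ => 1) ≤ max 1 (μ s) := by
  have hη' : max 1 (μ s) < ⊤ := max_lt ENNReal.one_lt_top hs'.lt_top
  refine sInf_le ⟨one_pos.trans_le (le_max_left _ _), hη', ?_⟩
  rw [lintegral_indicator_one_div_rpow (hq.mono fun _ => one_pos.trans_le) hs]
  set η := max 1 (μ s)
  calc ∫⁻ x in s, η⁻¹ ^ q x ∂μ ≤ ∫⁻ _ in s, η⁻¹ ∂μ := by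
        refine lintegral_mono_ae ((ae_restrict_of_ae hq).mono fun x hqx => ?_)
        exact ENNReal.rpow_le_self_of_le_one (ENNReal.inv_le_one.2 (le_max_left _ _)) hqx
    _ = η⁻¹ * μ s := setLIntegral_const s _
    _ ≤ η⁻¹ * η := by gcongr; exact le_max_right _ _
    _ ≤ 1 := ENNReal.inv_mul_le_one _

theorem min_le_luxNorm_indicator_one (hq : ∀ᵐ x ∂μ, 1 ≤ q x) {s : Set (Fin n → ℚ_[p])}
    (hs : MeasurableSet s) : min 1 (μ s) ≤ luxNorm μ q (s.indicator fun _ => 1) := by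
  refine le_sInf fun η ⟨hη, hη', hle⟩ => ?_
  rw [lintegral_indicator_one_div_rpow (hq.mono fun _ => one_pos.trans_le) hs] at hle
  rcases le_total 1 η with hη1 | hη1
  · exact (min_le_left _ _).trans hη1
  · refine (min_le_right _ _).trans ?_
    rw [← one_mul η, ← ENNReal.div_le_iff hη.ne' hη'.ne, ENNReal.div_eq_inv_mul,
      ← setLIntegral_const]
    refine (lintegral_mono_ae ((ae_restrict_of_ae hq).mono fun x hqx => ?_)).trans hle
    exact ENNReal.le_rpow_self_of_one_le (ENNReal.one_le_inv.2 hη1) hqx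

theorem luxNorm_indicator_one_ne_zero (hq : ∀ᵐ x ∂μ, 1 ≤ q x) {s : Set (Fin n → ℚ_[p])}
    (hs : MeasurableSet s) (hs' : μ s ≠ 0) : luxNorm μ q (s.indicator fun _ => 1) ≠ 0 :=
  ((lt_min one_pos hs'.bot_lt).trans_le (min_le_luxNorm_indicator_one hq hs)).ne'

theorem luxNorm_indicator_one_ne_top (hq : ∀ᵐ x ∂μ, 1 ≤ q x) {s : Set (Fin n → ℚ_[p])}
    (hs : MeasurableSet s) (hs' : μ s ≠ ⊤) : luxNorm μ q (s.indicator fun _ => 1) ≠ ⊤ :=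
  ((luxNorm_indicator_one_le_max hq hs hs').trans_lt (max_lt ENNReal.one_lt_top hs'.lt_top)).ne

end Luxemburg

section FractionalMaximal

variable (μ : Measure (Fin n → ℚ_[p]))

section PositiveOnOpens

variable [μ.IsOpenPosMeasure] [IsFiniteMeasureOnCompacts μ]

theorem fracMaxOn_eq_iSup_rpow_mul_setLAverage (α : ℝ) (B : Set (Fin n → ℚ_[p]))
    (f : (Fin n → ℚ_[p]) → ℝ) (z : Fin n → ℚ_[p]) :
    fracMaxOn μ α B f z = ⨆ (γ : ℤ) (_ : pBall z γ ⊆ B),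
      μ (pBall z γ) ^ (α / n) * ⨍⁻ y in pBall z γ, ‖f y‖ₑ ∂μ :=
  iSup_congr fun γ => iSup_congr fun _ =>
    measure_rpow_sub_one_mul_setLIntegral (measure_pBall_ne_zero μ z γ)
      (measure_pBall_ne_top μ z γ) _ _

theorem setLAverage_le_fracMax_zero (f : (Fin n → ℚ_[p]) → ℝ) {x z : Fin n → ℚ_[p]} {γ : ℤ}
    (hz : z ∈ pBall x γ) : ⨍⁻ y in pBall x γ, ‖f y‖ₑ ∂μ ≤ fracMax μ 0 f z := by
  rw [pBall_eq_of_mem hz]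
  refine le_of_eq_of_le ?_ (le_iSup _ γ)
  simp only [zero_div, ← enorm_eq_nnnorm]
  rw [measure_rpow_sub_one_mul_setLIntegral (measure_pBall_ne_zero μ z γ)
    (measure_pBall_ne_top μ z γ), ENNReal.rpow_zero, one_mul]

theorem rpow_mul_setLAverage_le_fracMaxOn (α : ℝ) (f : (Fin n → ℚ_[p]) → ℝ)
    {x z : Fin n → ℚ_[p]} {γ : ℤ} (hz : z ∈ pBall x γ) :
    μ (pBall x γ) ^ (α / n) * ⨍⁻ y in pBall x γ, ‖f y‖ₑ ∂μ ≤ fracMaxOn μ α (pBall x γ) f z := by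
  rw [fracMaxOn_eq_iSup_rpow_mul_setLAverage, pBall_eq_of_mem hz]
  exact le_iSup₂_of_le γ subset_rfl le_rfl

theorem fracMaxOn_le_rpow_mul_fracMaxOn_zero {α : ℝ} (hα : 0 ≤ α) (B : Set (Fin n → ℚ_[p]))
    (f : (Fin n → ℚ_[p]) → ℝ) (z : Fin n → ℚ_[p]) :
    fracMaxOn μ α B f z ≤ μ B ^ (α / n) * fracMaxOn μ 0 B f z := by
  simp only [fracMaxOn_eq_iSup_rpow_mul_setLAverage, ENNReal.mul_iSup, zero_div,
    ENNReal.rpow_zero, one_mul]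
  gcongr with γ hγ

theorem setAverage_le_rpow_mul_toReal_fracMaxOn {f : (Fin n → ℚ_[p]) → ℝ}
    (hf : LocallyIntegrable f μ) (α : ℝ) {x z : Fin n → ℚ_[p]} {γ : ℤ} (hz : z ∈ pBall x γ)
    (hfin : fracMaxOn μ α (pBall x γ) f z ≠ ⊤) :
    ⨍ y in pBall x γ, f y ∂μ ≤
      μ.real (pBall x γ) ^ (-(α / n)) * (fracMaxOn μ α (pBall x γ) f z).toReal := by
  have hpos := measureReal_pBall_pos μ x γ
  have habs : ⨍ y in pBall x γ, f y ∂μ ≤ ⨍ y in pBall x γ, ‖f y‖ ∂μ := by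
    have hint := integrableOn_pBall hf x γ
    simp only [setAverage_eq, smul_eq_mul]
    exact mul_le_mul_of_nonneg_left (integral_mono hint hint.norm fun y => le_abs_self _)
      (inv_nonneg.2 hpos.le)
  refine habs.trans ?_
  rw [Real.rpow_neg hpos.le, ← div_eq_inv_mul, le_div_iff₀' (by positivity)]
  have h := ENNReal.toReal_mono hfin (rpow_mul_setLAverage_le_fracMaxOn μ α f hz)
  rwa [← ofReal_average_norm (integrableOn_pBall hf x γ), ENNReal.toReal_mul,
    ← ENNReal.toReal_rpow, ENNReal.toReal_ofReal (by rw [setAverage_eq]; positivity)] at h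

end PositiveOnOpens

variable [BorelSpace (Fin n → ℚ_[p])] [μ.IsAddHaarMeasure]

theorem ae_exists_forall_setLAverage_pBall_le {E : Type*} [NormedAddCommGroup E]
    {f : (Fin n → ℚ_[p]) → E} (hf : LocallyIntegrable f μ) :
    ∀ᵐ z ∂μ, ∃ γ₀ : ℤ, ∀ γ ≤ γ₀, ⨍⁻ y in pBall z γ, ‖f y‖ₑ ∂μ ≤ ENNReal.ofReal (‖f z‖ + 1) := by
  filter_upwards [ae_tendsto_setAverage_pBall μ (fun x => (hf x).norm)] with z hz
  obtain ⟨γ₀, hγ₀⟩ := eventually_atBot.1 (hz.eventually_le_const (lt_add_one ‖f z‖))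
  refine ⟨γ₀, fun γ hγ => ?_⟩
  rw [← ofReal_average_norm (integrableOn_pBall hf z γ)]
  exact ENNReal.ofReal_le_ofReal (hγ₀ γ hγ)

theorem ae_fracMaxOn_zero_ne_top {f : (Fin n → ℚ_[p]) → ℝ} (hf : LocallyIntegrable f μ)
    {B : Set (Fin n → ℚ_[p])} (hfB : IntegrableOn f B μ) :
    ∀ᵐ z ∂μ, fracMaxOn μ 0 B f z ≠ ⊤ := by
  filter_upwards [ae_exists_forall_setLAverage_pBall_le μ hf] with z ⟨γ₀, hγ₀⟩
  refine ne_top_of_le_ne_top (b := max (ENNReal.ofReal (‖f z‖ + 1))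
    ((∫⁻ y in B, ‖f y‖ₑ ∂μ) / μ (pBall z γ₀))) ?_ ?_
  · exact (max_lt ENNReal.ofReal_lt_top
      (ENNReal.div_lt_top hfB.2.ne (measure_pBall_ne_zero μ z γ₀))).ne
  simp only [fracMaxOn_eq_iSup_rpow_mul_setLAverage, zero_div, ENNReal.rpow_zero, one_mul]
  refine iSup₂_le fun γ hγB => ?_
  rcases le_total γ γ₀ with hγ | hγ
  · exact (hγ₀ γ hγ).trans (le_max_left _ _)
  · refine le_trans ?_ (le_max_right _ _)
    rw [setLAverage_eq]
    gcongr
    exact pBall_subset_pBall z hγ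

theorem ae_fracMaxOn_ne_top {f : (Fin n → ℚ_[p]) → ℝ} (hf : LocallyIntegrable f μ) {α : ℝ}
    (hα : 0 ≤ α) {B : Set (Fin n → ℚ_[p])} (hfB : IntegrableOn f B μ) (hB : μ B ≠ ⊤) :
    ∀ᵐ z ∂μ, fracMaxOn μ α B f z ≠ ⊤ := by
  filter_upwards [ae_fracMaxOn_zero_ne_top μ hf hfB] with z hz
  exact ne_top_of_le_ne_top (ENNReal.mul_ne_top
    (ENNReal.rpow_ne_top_of_nonneg (by positivity) hB) hz)
    (fracMaxOn_le_rpow_mul_fracMaxOn_zero μ hα B f z)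

end FractionalMaximal

section Oscillation

theorem le_mul_rpow_mul_of_rpow_neg_mul_div_le {m L N c : ℝ≥0∞} {s : ℝ} (hm : m ≠ 0)
    (hm' : m ≠ ⊤) (hN : N ≠ 0) (hN' : N ≠ ⊤) (h : m ^ (-s) * (L / N) ≤ c) :
    L ≤ c * m ^ s * N := by
  have hs : m ^ s ≠ 0 := (ENNReal.rpow_pos hm.bot_lt hm').ne'
  have hs' : m ^ s ≠ ⊤ := ENNReal.rpow_ne_top_of_ne_zero hm hm'
  rwa [ENNReal.rpow_neg, ← ENNReal.div_eq_inv_mul, ENNReal.div_le_iff hs hs',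
    ENNReal.div_le_iff hN hN'] at h

/-- The averaging operators `f ↦ ⟨|f|⟩_B χ_B` over balls `B` are uniformly bounded on `L^{q(·)}`
with constant `A`. The oscillation of `b` over balls is estimated by means of this consequence of
the boundedness of the maximal operator. -/
def BallAveragesBoundedBy (μ : Measure (Fin n → ℚ_[p])) (q : (Fin n → ℚ_[p]) → ℝ)
    (A : ℝ≥0) : Prop :=
  ∀ (γ : ℤ) (x : Fin n → ℚ_[p]) (f : (Fin n → ℚ_[p]) → ℝ), AEMeasurable f μ →
    (⨍⁻ y in pBall x γ, ‖f y‖ₑ ∂μ) * luxNorm μ q ((pBall x γ).indicator fun _ => 1) ≤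
      A * luxNorm μ q f

variable {μ : Measure (Fin n → ℚ_[p])} {q : (Fin n → ℚ_[p]) → ℝ} {A : ℝ≥0}

theorem setLAverage_mul_luxNorm_indicator_le_luxNormE_fracMax [μ.IsOpenPosMeasure]
    [IsFiniteMeasureOnCompacts μ] (hq : ∀ᵐ x ∂μ, 0 ≤ q x)
    (γ : ℤ) (x : Fin n → ℚ_[p]) (f : (Fin n → ℚ_[p]) → ℝ) :
    (⨍⁻ y in pBall x γ, ‖f y‖ₑ ∂μ) * luxNorm μ q ((pBall x γ).indicator fun _ => 1) ≤
      luxNormE μ q (fracMax μ 0 f) := by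
  refine (mul_luxNormE_le hq _ _).trans (luxNormE_mono_ae hq (ae_of_all _ fun z => ?_))
  by_cases hz : z ∈ pBall x γ
  · simpa only [indicator_of_mem hz, nnnorm_one, ENNReal.coe_one, mul_one] using
      setLAverage_le_fracMax_zero μ f hz
  · simp only [indicator_of_notMem hz, nnnorm_zero, ENNReal.coe_zero, mul_zero, zero_le]

theorem ballAveragesBoundedBy_of_fracMax_le [μ.IsOpenPosMeasure]
    [IsFiniteMeasureOnCompacts μ] (hq : ∀ᵐ x ∂μ, 0 ≤ q x) (hA : A ≠ 0)
    (hM : ∀ f : (Fin n → ℚ_[p]) → ℝ, Measurable f → luxNorm μ q f < ⊤ →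
      luxNormE μ q (fracMax μ 0 f) ≤ A * luxNorm μ q f) :
    BallAveragesBoundedBy μ q A := by
  have hmeas (γ : ℤ) (x : Fin n → ℚ_[p]) {f : (Fin n → ℚ_[p]) → ℝ} (hf : Measurable f) :
      (⨍⁻ y in pBall x γ, ‖f y‖ₑ ∂μ) * luxNorm μ q ((pBall x γ).indicator fun _ => 1) ≤
        A * luxNorm μ q f := by
    rcases eq_or_ne (luxNorm μ q f) ⊤ with htop | hfin
    · rw [htop, ENNReal.mul_top (ENNReal.coe_ne_zero.2 hA)]
      exact le_top
    · exact (setLAverage_mul_luxNorm_indicator_le_luxNormE_fracMax hq γ x f).trans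
        (hM f hf hfin.lt_top)
  intro γ x f hf
  have havg : ⨍⁻ y in pBall x γ, ‖f y‖ₑ ∂μ = ⨍⁻ y in pBall x γ, ‖hf.mk f y‖ₑ ∂μ :=
    laverage_congr (ae_restrict_of_ae (hf.ae_eq_mk.mono fun y hy => by simp only [hy]))
  have hnorm : luxNorm μ q f = luxNorm μ q (hf.mk f) :=
    luxNormE_congr_ae μ q (hf.ae_eq_mk.mono fun y hy => by simp only [hy])
  rw [havg, hnorm]
  exact hmeas γ x hf.measurable_mk

variable [BorelSpace (Fin n → ℚ_[p])]

theorem ofReal_setAverage_abs_sub_mul_luxNorm_indicator_le [IsFiniteMeasureOnCompacts μ]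
    (hq : ∀ᵐ x ∂μ, 0 ≤ q x) (hA : BallAveragesBoundedBy μ q A)
    {f h : (Fin n → ℚ_[p]) → ℝ} (hf : LocallyIntegrable f μ) (γ : ℤ) (x : Fin n → ℚ_[p])
    (hh : ∀ᵐ z ∂μ, z ∈ pBall x γ → ⨍ y in pBall x γ, f y ∂μ - f z ≤ |h z|) :
    ENNReal.ofReal (⨍ y in pBall x γ, |f y - ⨍ z in pBall x γ, f z ∂μ| ∂μ) *
        luxNorm μ q ((pBall x γ).indicator fun _ => 1) ≤
      2 * A * luxNorm μ q ((pBall x γ).indicator h) := by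
  have hB := measurableSet_pBall x γ
  have hfB := integrableOn_pBall hf x γ
  have : IsFiniteMeasure (μ.restrict (pBall x γ)) := ⟨by
    simpa only [Measure.restrict_apply_univ] using (measure_pBall_ne_top μ x γ).lt_top⟩
  set m := ⨍ y in pBall x γ, f y ∂μ
  let v (y : Fin n → ℚ_[p]) : ℝ := max (m - f y) 0
  have hv : AEMeasurable ((pBall x γ).indicator v) μ := (aemeasurable_indicator_iff hB).2
    ((aemeasurable_const.sub hfB.aemeasurable).max aemeasurable_const)
  have hosc : ENNReal.ofReal (⨍ y in pBall x γ, |f y - m| ∂μ) =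
      2 * ⨍⁻ y in pBall x γ, ‖(pBall x γ).indicator v y‖ₑ ∂μ := by
    rw [ofReal_average_abs_sub_average hfB]
    congr 1
    exact setLAverage_congr_fun hB fun y hy => by simp only [v, m, indicator_of_mem hy]
  have hle : luxNorm μ q ((pBall x γ).indicator v) ≤ luxNorm μ q ((pBall x γ).indicator h) := by
    refine luxNormE_mono_ae hq (hh.mono fun z hz => ?_)
    by_cases hzB : z ∈ pBall x γ
    · simp only [indicator_of_mem hzB, ENNReal.coe_le_coe, ← NNReal.coe_le_coe, coe_nnnorm]
      rw [Real.norm_of_nonneg (le_max_right _ _)]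
      exact max_le (hz hzB) (norm_nonneg _)
    · simp only [indicator_of_notMem hzB, le_refl]
  rw [hosc, mul_assoc, mul_assoc]
  exact mul_le_mul_right ((hA γ x _ hv).trans (mul_le_mul_right hle _)) _

variable [μ.IsAddHaarMeasure] {α β : ℝ} {b : (Fin n → ℚ_[p]) → ℝ}

theorem ae_setAverage_sub_le_abs_sub_fracMaxOn (hα : 0 ≤ α) (hb : LocallyIntegrable b μ)
    (γ : ℤ) (x : Fin n → ℚ_[p]) :
    ∀ᵐ z ∂μ, z ∈ pBall x γ → ⨍ y in pBall x γ, b y ∂μ - b z ≤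
      |b z - μ.real (pBall x γ) ^ (-(α / n)) * (fracMaxOn μ α (pBall x γ) b z).toReal| := by
  filter_upwards [ae_fracMaxOn_ne_top μ hb hα (integrableOn_pBall hb x γ)
    (measure_pBall_ne_top μ x γ)] with z hfin hz
  have hmean := setAverage_le_rpow_mul_toReal_fracMaxOn μ hb α hz hfin
  rw [abs_sub_comm]
  exact (sub_le_sub_right hmean _).trans (le_abs_self _)

theorem setAverage_abs_sub_setAverage_le_of_luxNorm_le (hα : 0 ≤ α)
    (hb : LocallyIntegrable b μ) (hq : ∀ᵐ x ∂μ, 1 ≤ q x) (hA : BallAveragesBoundedBy μ q A)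
    {C : ℝ≥0} {γ : ℤ} {x : Fin n → ℚ_[p]}
    (hC : μ (pBall x γ) ^ (-(β / n)) *
      (luxNorm μ q ((pBall x γ).indicator fun z =>
          b z - μ.real (pBall x γ) ^ (-(α / n)) * (fracMaxOn μ α (pBall x γ) b z).toReal) /
        luxNorm μ q ((pBall x γ).indicator fun _ => 1)) ≤ C) :
    ⨍ y in pBall x γ, |b y - ⨍ z in pBall x γ, b z ∂μ| ∂μ ≤
      2 * A * C * μ.real (pBall x γ) ^ (β / n) := by
  have hB := measurableSet_pBall x γ
  have hN := luxNorm_indicator_one_ne_zero hq hB (measure_pBall_ne_zero μ x γ)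
  have hN' := luxNorm_indicator_one_ne_top hq hB (measure_pBall_ne_top μ x γ)
  have hosc := ofReal_setAverage_abs_sub_mul_luxNorm_indicator_le
    (hq.mono fun _ => zero_le_one.trans) hA hb γ x
    (ae_setAverage_sub_le_abs_sub_fracMaxOn hα hb γ x)
  have hL := le_mul_rpow_mul_of_rpow_neg_mul_div_le (measure_pBall_ne_zero μ x γ)
    (measure_pBall_ne_top μ x γ) hN hN' hC
  have hcancel : ENNReal.ofReal (⨍ y in pBall x γ, |b y - ⨍ z in pBall x γ, b z ∂μ| ∂μ) ≤
      2 * A * (C * μ (pBall x γ) ^ (β / n)) := by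
    rw [← ENNReal.mul_le_mul_iff_left hN hN', mul_assoc (2 * (A : ℝ≥0∞))]
    exact hosc.trans (by gcongr)
  have hfin : 2 * A * (C * μ (pBall x γ) ^ (β / n)) ≠ ⊤ := by
    have := ENNReal.rpow_ne_top_of_ne_zero (y := β / n) (measure_pBall_ne_zero μ x γ)
      (measure_pBall_ne_top μ x γ)
    finiteness
  have h := (ENNReal.ofReal_le_iff_le_toReal hfin).1 hcancel
  simpa only [ENNReal.toReal_mul, ENNReal.toReal_ofNat, ENNReal.coe_toReal,
    ← ENNReal.toReal_rpow, ← measureReal_def, ← mul_assoc] using h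

end Oscillation

theorem lipschitz_of_fracMaxOn_luxNorm_bound_general
    (hn : 0 < n) [BorelSpace (Fin n → ℚ_[p])]
    (μ : Measure (Fin n → ℚ_[p])) [μ.IsAddHaarMeasure]
    {α β : ℝ} (hα : 0 ≤ α) (hβ : 0 < β)
    {b : (Fin n → ℚ_[p]) → ℝ} (hb : LocallyIntegrable b μ)
    {q : (Fin n → ℚ_[p]) → ℝ} (hq : ∀ᵐ x ∂μ, 1 ≤ q x)
    {A : ℝ≥0} (hA : BallAveragesBoundedBy μ q A) {C : ℝ≥0}
    (hsup : ∀ (γ : ℤ) (x : Fin n → ℚ_[p]),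
      μ (pBall x γ) ^ (-(β / n)) *
        (luxNorm μ q ((pBall x γ).indicator fun z =>
            b z - μ.real (pBall x γ) ^ (-(α / n)) * (fracMaxOn μ α (pBall x γ) b z).toReal) /
          luxNorm μ q ((pBall x γ).indicator fun _ => 1)) ≤ C) :
    ∃ g : (Fin n → ℚ_[p]) → ℝ, MemLipschitz β g ∧ b =ᵐ[μ] g := by
  refine exists_memLipschitz_of_setAverage_abs_sub_setAverage_le hb hβ
    (K := 2 * A * C * μ.real (closedBall 0 1) ^ (β / n)) (by positivity) fun γ x => ?_
  rw [mul_assoc, ← measureReal_pBall_rpow_div μ hn β x γ]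
  exact setAverage_abs_sub_setAverage_le_of_luxNorm_le hα hb hq hA (hsup γ x)

theorem lipschitz_of_fracMaxOn_luxNorm_bound
    (hn : 0 < n) [BorelSpace (Fin n → ℚ_[p])]
    (μ : Measure (Fin n → ℚ_[p])) [μ.IsAddHaarMeasure]
    (hμ : μ (Metric.closedBall 0 1) = 1)
    (α β : ℝ) (hα0 : 0 < α) (hαn : α < n) (hβ0 : 0 < β) (hβ1 : β < 1)
    (b : (Fin n → ℚ_[p]) → ℝ) (hb : LocallyIntegrable b μ)
    (q : (Fin n → ℚ_[p]) → ℝ) (hq : IsPExp μ q)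
    (hqB : ∃ C : ℝ, 0 < C ∧ ∀ f : (Fin n → ℚ_[p]) → ℝ, Measurable f → luxNorm μ q f < ⊤ →
      luxNormE μ q (fracMax μ 0 f) ≤ ENNReal.ofReal C * luxNorm μ q f)
    (C : ℝ)
    (hsup : ∀ (γ : ℤ) (x : (Fin n → ℚ_[p])),
      μ (pBall x γ) ^ (-(β / (n : ℝ))) *
        (luxNorm μ q (Set.indicator (pBall x γ) (fun z =>
            b z - (μ (pBall x γ)).toReal ^ (-(α / (n : ℝ))) *
              (fracMaxOn μ α (pBall x γ) b z).toReal)) /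
          luxNorm μ q (Set.indicator (pBall x γ) (fun _ => (1 : ℝ)))) ≤ ENNReal.ofReal C) :
    ∃ g : (Fin n → ℚ_[p]) → ℝ, MemLipschitz β g ∧ b =ᵐ[μ] g := by
  obtain ⟨C₀, hC₀, hM⟩ := hqB
  exact lipschitz_of_fracMaxOn_luxNorm_bound_general hn μ hα0.le hβ0 hb (ae_of_all _ hq.2.1)
    (ballAveragesBoundedBy_of_fracMax_le (ae_of_all _ fun x => zero_le_one.trans (hq.2.1 x))
      (Real.toNNReal_pos.2 hC₀).ne' hM) hsup

end
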